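/- arXiv:2403.14964 — 2 statements merged into one kernel-verified Lean document; each statement's English description precedes it below -/
import Mathlib

section
/- Let n be a positive integer, let λ = (λ_1,…,λ_r) and μ = (μ_1,…,μ_s) be compositions of n with associated blocks Y_i(λ), Y_j(μ) and Young subgroups S_λ, S_μ ≤ S_n, and let σ ∈ S_n. Set γ_{ij} := card(σ(Y_i(λ)) ∩ Y_j(μ)). Then the subgroup {τ ∈ S_λ : σ τ σ⁻¹ ∈ S_μ} = S_λ ∩ σ⁻¹ S_μ σ of S_n consists exactly of those permutations that map each set Y_i(λ) ∩ σ⁻¹(Y_j(μ)) into itself, and its cardinality equals ∏_{i=1}^{r} ∏_{j=1}^{s} γ_{ij}!. -/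
/-- The `i`-th consecutive block of `{0, …, n-1}` (0-indexed version of `{1, …, n}`)
associated to a composition `lam = (lam 0, …, lam (r-1))` of `n`. -/
def blockSet (n : ℕ) {r : ℕ} (lam : Fin r → ℕ) (i : Fin r) : Finset (Fin n) :=
  Finset.univ.filter fun x : Fin n =>
    (∑ i' ∈ Finset.Iio i, lam i') ≤ (x : ℕ) ∧ (x : ℕ) < ∑ i' ∈ Finset.Iic i, lam i'

/-!
Young subgroups are stabilizers of finite partitions. A permutation preserves two partitions `A`
and `C` exactly when it preserves their common refinement, whose parts are the `A i ∩ C j`, and the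
stabilizer of a partition is the product of the symmetric groups on its parts. Conjugation by `σ`
turns the stabilizer of `B` into that of the translate `C j = σ⁻¹ (B j)`, and `σ` carries
`A i ∩ σ⁻¹ (B j)` onto `σ (A i) ∩ B j`.
-/

section PartialSums

variable {ι M : Type*} [LinearOrder ι] [LocallyFiniteOrderBot ι]
  [AddCommMonoid M] [LinearOrder M] [CanonicallyOrderedAdd M] {f : ι → M}

theorem exists_mem_lt_sum_Iic_of_lt_sum {s : Finset ι} {m : M} (h : m < ∑ i ∈ s, f i) :
    ∃ k ∈ s, m < ∑ i ∈ Finset.Iic k, f i := by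
  have hs : s.Nonempty := Finset.nonempty_of_sum_ne_zero (pos_of_gt h).ne'
  exact ⟨s.max' hs, s.max'_mem hs, h.trans_le <|
    Finset.sum_le_sum_of_subset fun i hi => Finset.mem_Iic.2 (s.le_max' i hi)⟩

theorem le_of_sum_Iio_le_of_lt_sum_Iic {i j : ι} {m : M} (hi : ∑ k ∈ Finset.Iio i, f k ≤ m)
    (hj : m < ∑ k ∈ Finset.Iic j, f k) : i ≤ j := by
  by_contra! hji
  have hsub : Finset.Iic j ⊆ Finset.Iio i := fun k hk =>
    Finset.mem_Iio.2 ((Finset.mem_Iic.1 hk).trans_lt hji)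
  exact (hj.trans_le (Finset.sum_le_sum_of_subset hsub)).not_ge hi

theorem existsUnique_sum_Iio_le_lt_sum_Iic [Fintype ι] {m : M} (hm : m < ∑ i, f i) :
    ∃! i, ∑ k ∈ Finset.Iio i, f k ≤ m ∧ m < ∑ k ∈ Finset.Iic i, f k := by
  obtain ⟨k, -, hk⟩ := exists_mem_lt_sum_Iic_of_lt_sum hm
  obtain ⟨i, hi⟩ := exists_minimal_of_wellFoundedLT (fun i => m < ∑ k ∈ Finset.Iic i, f k) ⟨k, hk⟩
  have hle : ∑ k ∈ Finset.Iio i, f k ≤ m := by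
    by_contra! hlt
    obtain ⟨j, hji, hj⟩ := exists_mem_lt_sum_Iic_of_lt_sum hlt
    exact hi.not_prop_of_lt (Finset.mem_Iio.1 hji) hj
  exact ⟨i, ⟨hle, hi.prop⟩, fun j hj => le_antisymm
    (le_of_sum_Iio_le_of_lt_sum_Iic hj.1 hi.prop) (le_of_sum_Iio_le_of_lt_sum_Iic hle hj.2)⟩

end PartialSums

theorem existsUnique_mem_blockSet {n r : ℕ} {lam : Fin r → ℕ} (hlam : ∑ i, lam i = n)
    (x : Fin n) : ∃! i, x ∈ blockSet n lam i := by
  simpa [blockSet] using existsUnique_sum_Iio_le_lt_sum_Iic (x.isLt.trans_eq hlam.symm)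

section Partitions

variable {α ι κ : Type*}

theorem existsUnique_mem_inter [DecidableEq α] {A : ι → Finset α} {C : κ → Finset α} {x : α}
    (hA : ∃! i, x ∈ A i) (hC : ∃! j, x ∈ C j) : ∃! p : ι × κ, x ∈ A p.1 ∩ C p.2 := by
  obtain ⟨i, hi, hi_unique⟩ := hA
  obtain ⟨j, hj, hj_unique⟩ := hC
  refine ⟨(i, j), Finset.mem_inter.2 ⟨hi, hj⟩, fun p hp => ?_⟩
  obtain ⟨hpA, hpC⟩ := Finset.mem_inter.1 hp
  exact Prod.ext (hi_unique p.1 hpA) (hj_unique p.2 hpC)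

theorem forall_mapsTo_and_forall_mapsTo_iff [DecidableEq α] {A : ι → Finset α}
    {C : κ → Finset α} (hA : ∀ x, ∃ i, x ∈ A i) (hC : ∀ x, ∃ j, x ∈ C j) {f : α → α} :
    ((∀ i, ∀ x ∈ A i, f x ∈ A i) ∧ ∀ j, ∀ x ∈ C j, f x ∈ C j) ↔
      ∀ i j, ∀ x ∈ A i ∩ C j, f x ∈ A i ∩ C j := by
  simp only [Finset.mem_inter]
  refine ⟨fun h i j x hx => ⟨h.1 i x hx.1, h.2 j x hx.2⟩,
    fun h => ⟨fun i x hx => ?_, fun j x hx => ?_⟩⟩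
  · obtain ⟨j, hj⟩ := hC x
    exact (h i j x ⟨hx, hj⟩).1
  · obtain ⟨i, hi⟩ := hA x
    exact (h i j x ⟨hi, hx⟩).2

theorem card_perm_forall_mapsTo [Fintype ι] {A : ι → Finset α} (hA : ∀ x, ∃! i, x ∈ A i) :
    Nat.card {τ : Equiv.Perm α // ∀ i, ∀ x ∈ A i, τ x ∈ A i} = ∏ i, (A i).card.factorial := by
  classical
  choose label mem_label label_unique using hA
  let _ : Fintype α := ⟨Finset.univ.biUnion A, fun x =>
    Finset.mem_biUnion.2 ⟨label x, Finset.mem_univ _, mem_label x⟩⟩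
  have mem_iff (x : α) (i : ι) : x ∈ A i ↔ label x = i :=
    ⟨fun hx => (label_unique x i hx).symm, fun hx => hx ▸ mem_label x⟩
  have preserves_iff (τ : Equiv.Perm α) :
      (∀ i, ∀ x ∈ A i, τ x ∈ A i) ↔ label ∘ τ = label := by
    simp only [mem_iff, funext_iff]
    rw [forall_comm]
    simp
  have card_fiber (i : ι) : Fintype.card {x // label x = i} = (A i).card :=
    Fintype.card_of_subtype _ fun x => mem_iff x i
  calc
    Nat.card {τ : Equiv.Perm α // ∀ i, ∀ x ∈ A i, τ x ∈ A i}
      = Nat.card {τ : Equiv.Perm α // label ∘ τ = label} :=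
        Nat.card_congr (Equiv.subtypeEquivRight preserves_iff)
    _ = ∏ i, (Fintype.card {x // label x = i}).factorial := by
        rw [Nat.card_eq_fintype_card, DomMulAct.stabilizer_card]
    _ = ∏ i, (A i).card.factorial := by simp only [card_fiber]

end Partitions

section Images

variable {α : Type*} [DecidableEq α]

theorem image_eq_self_iff_of_injOn {f : α → α} {s : Finset α} (hf : Set.InjOn f s) :
    s.image f = s ↔ ∀ x ∈ s, f x ∈ s := by
  rw [← Finset.image_subset_iff]
  exact ⟨fun h => h.subset, fun h =>
    Finset.eq_of_subset_of_card_le h (Finset.card_image_of_injOn hf).ge⟩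

theorem image_conj_eq_self_iff (σ τ : Equiv.Perm α) (s : Finset α) :
    s.image ⇑(σ * τ * σ⁻¹) = s ↔ (s.image ⇑σ⁻¹).image τ = s.image ⇑σ⁻¹ := by
  rw [← (Finset.image_injective σ⁻¹.injective).eq_iff]
  simp [Finset.image_image, Function.comp_def]

theorem existsUnique_mem_image_inv {κ : Type*} {B : κ → Finset α} {σ : Equiv.Perm α} {x : α}
    (hB : ∃! j, σ x ∈ B j) : ∃! j, x ∈ (B j).image ⇑σ⁻¹ := by
  simpa [Equiv.symm_apply_eq] using hB

theorem card_inter_image_inv (σ : Equiv.Perm α) (s t : Finset α) :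
    (s ∩ t.image ⇑σ⁻¹).card = (s.image σ ∩ t).card := by
  rw [← Finset.card_image_of_injective _ σ.injective, Finset.image_inter _ _ σ.injective]
  simp [Finset.image_image, Function.comp_def]

end Images

theorem stabilizer_card_general {α ι κ : Type*} [DecidableEq α] [Fintype ι] [Fintype κ]
    {A : ι → Finset α} {B : κ → Finset α}
    (hA : ∀ x, ∃! i, x ∈ A i) (hB : ∀ x, ∃! j, x ∈ B j) (σ : Equiv.Perm α) :
    (∀ τ : Equiv.Perm α,
      ((∀ i, (A i).image ⇑τ = A i) ∧ (∀ j, (B j).image ⇑(σ * τ * σ⁻¹) = B j)) ↔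
        ∀ i j, ∀ x ∈ A i ∩ (B j).image ⇑σ⁻¹, τ x ∈ A i ∩ (B j).image ⇑σ⁻¹) ∧
    Nat.card {τ : Equiv.Perm α //
        (∀ i, (A i).image ⇑τ = A i) ∧ (∀ j, (B j).image ⇑(σ * τ * σ⁻¹) = B j)} =
      ∏ i, ∏ j, ((A i).image ⇑σ ∩ B j).card.factorial := by
  have hC (x : α) := existsUnique_mem_image_inv (hB (σ x))
  have preserves_iff (τ : Equiv.Perm α) :
      ((∀ i, (A i).image ⇑τ = A i) ∧ (∀ j, (B j).image ⇑(σ * τ * σ⁻¹) = B j)) ↔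
        ∀ i j, ∀ x ∈ A i ∩ (B j).image ⇑σ⁻¹, τ x ∈ A i ∩ (B j).image ⇑σ⁻¹ := by
    simp only [image_conj_eq_self_iff, image_eq_self_iff_of_injOn τ.injective.injOn]
    exact forall_mapsTo_and_forall_mapsTo_iff (fun x => (hA x).exists) fun x => (hC x).exists
  refine ⟨preserves_iff, ?_⟩
  have hcard := card_perm_forall_mapsTo fun x => existsUnique_mem_inter (hA x) (hC x)
  simpa only [preserves_iff, Prod.forall, Fintype.prod_prod_type, card_inter_image_inv] using hcard

/-- The subgroup `{τ ∈ S_λ : σ τ σ⁻¹ ∈ S_μ} = S_λ ∩ σ⁻¹ S_μ σ` consists exactly of the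
permutations mapping each set `Y_i(λ) ∩ σ⁻¹(Y_j(μ))` into itself, and its cardinality is
`∏_{i,j} γ_{ij}!` where `γ_{ij} = card (σ(Y_i(λ)) ∩ Y_j(μ))`. -/
theorem stabilizer_card (n r s : ℕ) (hn : 0 < n)
    (lam : Fin r → ℕ) (mu : Fin s → ℕ)
    (hlampos : ∀ i, 0 < lam i) (hmupos : ∀ j, 0 < mu j)
    (hlamsum : ∑ i, lam i = n) (hmusum : ∑ j, mu j = n)
    (σ : Equiv.Perm (Fin n)) :
    (∀ τ : Equiv.Perm (Fin n),
      ((∀ i, (blockSet n lam i).image ⇑τ = blockSet n lam i) ∧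
       (∀ j, (blockSet n mu j).image ⇑(σ * τ * σ⁻¹) = blockSet n mu j)) ↔
      (∀ (i : Fin r) (j : Fin s),
        ∀ x ∈ blockSet n lam i ∩ (blockSet n mu j).image ⇑σ⁻¹,
          τ x ∈ blockSet n lam i ∩ (blockSet n mu j).image ⇑σ⁻¹)) ∧
    Nat.card {τ : Equiv.Perm (Fin n) //
        (∀ i, (blockSet n lam i).image ⇑τ = blockSet n lam i) ∧
        (∀ j, (blockSet n mu j).image ⇑(σ * τ * σ⁻¹) = blockSet n mu j)} =
      ∏ i : Fin r, ∏ j : Fin s,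
        Nat.factorial (((blockSet n lam i).image ⇑σ ∩ blockSet n mu j).card) :=
  stabilizer_card_general (existsUnique_mem_blockSet hlamsum) (existsUnique_mem_blockSet hmusum) σ
end

section
/- Let K be a field, V a finite-dimensional K-vector space, A : V → V a K-linear map, and n ≥ 1 an integer. Let c ∈ S_n be the cyclic permutation (1,2,…,n) (sending 1↦2, 2↦3, …, n↦1), and let P_c : V^{⊗n} → V^{⊗n} be the linear automorphism of the n-fold tensor power determined by permuting the tensor factors according to c, i.e. P_c(v_1 ⊗ v_2 ⊗ ⋯ ⊗ v_n) = v_{c^{-1}(1)} ⊗ v_{c^{-1}(2)} ⊗ ⋯ ⊗ v_{c^{-1}(n)}. Then the trace of the composite linear map P_c ∘ (A ⊗ A ⊗ ⋯ ⊗ A) : V^{⊗n} → V^{⊗n} equals the trace of A^n : V → V. -/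
open scoped TensorProduct

/-! In the basis of pure tensors of basis vectors, the diagonal entry of
`P_σ ∘ (A₁ ⊗ ⋯ ⊗ Aₙ)` at an index `p` is a product of matrix entries, the `i`-th being that of
`Aᵢ` leading from `p i` to `p (σ i)`. When `σ` is the full cycle these products are the weights of
the closed walks of length `n` on the basis, whose sum is the trace of `Aₙ ⋯ A₁`. -/

section MatrixWalks

variable {R κ : Type*} [CommSemiring R] [Fintype κ] [DecidableEq κ]

theorem matrix_trace_mul_prod_reverse_ofFn_eq_sum {n : ℕ} (M : Fin n → Matrix κ κ R)
    (N : Matrix κ κ R) :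
    (N * (List.ofFn M).reverse.prod).trace =
      ∑ p : Fin (n + 1) → κ, N (p 0) (p (Fin.last n)) * ∏ i, M i (p i.succ) (p i.castSucc) := by
  induction n generalizing N with
  | zero =>
    rw [← (Equiv.funUnique (Fin 1) κ).symm.sum_comp]
    simp [Matrix.trace]
  | succ n ih =>
    have first_step_moved_to_front :
        (N * (List.ofFn M).reverse.prod).trace =
          (M 0 * N * (List.ofFn fun i : Fin n => M i.succ).reverse.prod).trace := by
      rw [List.ofFn_succ, List.reverse_cons, List.prod_append, List.prod_singleton,
        ← Matrix.mul_assoc, Matrix.trace_mul_comm, ← Matrix.mul_assoc]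
    rw [first_step_moved_to_front, ih, ← (Fin.consEquiv fun _ : Fin (n + 2) => κ).sum_comp,
      Fintype.sum_prod_type, Finset.sum_comm]
    refine Finset.sum_congr rfl fun q _ => ?_
    rw [Matrix.mul_apply, Finset.sum_mul]
    refine Finset.sum_congr rfl fun a _ => ?_
    simp only [Fin.prod_univ_succ, Fin.consEquiv_apply, Fin.cons_zero, Fin.cons_succ,
      Fin.castSucc_zero, ← Fin.succ_last, ← Fin.succ_castSucc]
    ring

theorem matrix_trace_prod_reverse_ofFn_eq_sum {n : ℕ} (hn : 1 ≤ n) (M : Fin n → Matrix κ κ R) :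
    (List.ofFn M).reverse.prod.trace =
      ∑ p : Fin n → κ, ∏ i, M i (p (finRotate n i)) (p i) := by
  obtain ⟨m, rfl⟩ := Nat.exists_eq_add_of_le' hn
  rw [List.ofFn_succ', List.concat_eq_append, List.reverse_append, List.reverse_singleton,
    List.singleton_append, List.prod_cons, matrix_trace_mul_prod_reverse_ofFn_eq_sum]
  refine Finset.sum_congr rfl fun p _ => ?_
  simp [Fin.prod_univ_castSucc, mul_comm]

end MatrixWalks

section TensorPower

variable {R M : Type*} [CommSemiring R] [AddCommMonoid M] [Module R M]

theorem trace_reindex_comp_map_eq_sum {ι κ : Type*} [Fintype ι] [DecidableEq ι] [Fintype κ]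
    [DecidableEq κ] (b : Module.Basis κ R M) (σ : Equiv.Perm ι) (A : ι → Module.End R M) :
    LinearMap.trace R _
        ((PiTensorProduct.reindex R (fun _ => M) σ).toLinearMap ∘ₗ PiTensorProduct.map A) =
      ∑ p : ι → κ, ∏ i, LinearMap.toMatrix b b (A i) (p (σ i)) (p i) := by
  rw [LinearMap.trace_eq_matrix_trace R (Basis.piTensorProduct fun _ : ι => b), Matrix.trace]
  refine Finset.sum_congr rfl fun p _ => ?_
  rw [Matrix.diag_apply, LinearMap.toMatrix_apply, LinearMap.comp_apply,
    Basis.piTensorProduct_apply, PiTensorProduct.map_tprod, LinearEquiv.coe_coe,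
    PiTensorProduct.reindex_tprod, Basis.piTensorProduct_repr_tprod_apply, ← Equiv.prod_comp σ]
  simp only [Equiv.symm_apply_apply, LinearMap.toMatrix_apply]

theorem trace_prod_reverse_ofFn_eq_sum {κ : Type*} [Fintype κ] [DecidableEq κ]
    (b : Module.Basis κ R M) {n : ℕ} (hn : 1 ≤ n) (A : Fin n → Module.End R M) :
    LinearMap.trace R M (List.ofFn A).reverse.prod =
      ∑ p : Fin n → κ, ∏ i, LinearMap.toMatrix b b (A i) (p (finRotate n i)) (p i) := by
  rw [← matrix_trace_prod_reverse_ofFn_eq_sum hn fun i => LinearMap.toMatrix b b (A i),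
    LinearMap.trace_eq_matrix_trace R b]
  have toMatrix_prod := map_list_prod (LinearMap.toMatrixAlgEquiv b) (List.ofFn A).reverse
  rw [List.map_reverse, List.map_ofFn] at toMatrix_prod
  exact congrArg Matrix.trace toMatrix_prod

theorem trace_cyclic_perm_tensor_pow_general [Module.Free R M] [Module.Finite R M] {n : ℕ}
    (hn : 1 ≤ n) (A : Fin n → Module.End R M)
    (P : (⨂[R] _ : Fin n, M) →ₗ[R] ⨂[R] _ : Fin n, M)
    (hP : ∀ v : Fin n → M,
      P (PiTensorProduct.tprod R v) =
        PiTensorProduct.tprod R fun i => v ((finRotate n)⁻¹ i)) :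
    LinearMap.trace R _ (P ∘ₗ PiTensorProduct.map A) =
      LinearMap.trace R M (List.ofFn A).reverse.prod := by
  classical
  have P_eq_reindex : P = (PiTensorProduct.reindex R (fun _ => M) (finRotate n)).toLinearMap := by
    ext v
    exact (hP v).trans
      (PiTensorProduct.reindex_tprod (R := R) (s := fun _ => M) (finRotate n) v).symm
  let b := Module.Free.chooseBasis R M
  rw [P_eq_reindex, trace_reindex_comp_map_eq_sum b, trace_prod_reverse_ofFn_eq_sum b hn]

end TensorPower

/-- Let `V` be a finite-dimensional vector space over a field `K`, `A : V → V` linear, and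
`n ≥ 1`. If `P` is the endomorphism of the `n`-fold tensor power `V^{⊗n}` permuting the
tensor factors according to the cyclic permutation `c = (1,2,…,n)` (so that the `i`-th
factor of `P(v₁ ⊗ ⋯ ⊗ vₙ)` is `v_{c⁻¹(i)}`; here `c = finRotate n`), then the trace of
`P ∘ (A ⊗ ⋯ ⊗ A)` equals the trace of `Aⁿ`. -/
theorem trace_cyclic_perm_tensor_pow (K : Type*) [Field K]
    (V : Type*) [AddCommGroup V] [Module K V] [FiniteDimensional K V]
    (A : V →ₗ[K] V) (n : ℕ) (hn : 1 ≤ n)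
    (P : (⨂[K] _ : Fin n, V) →ₗ[K] ⨂[K] _ : Fin n, V)
    (hP : ∀ v : Fin n → V,
      P (PiTensorProduct.tprod K v) =
        PiTensorProduct.tprod K fun i => v ((finRotate n)⁻¹ i)) :
    LinearMap.trace K _ (P ∘ₗ PiTensorProduct.map fun _ : Fin n => A) =
      LinearMap.trace K V (A ^ n) := by
  simpa using trace_cyclic_perm_tensor_pow_general hn (fun _ => A) P hP
end
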